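/- Let k ≥ 1 and let G be a graph attaining the maximum Wiener index among all connected graphs on n vertices with exactly k cut vertices. Then every pendant block of G is either K₂ or a cycle on at least 4 vertices. -/

import Mathlib

/-!
Let `B` be a pendant block of the extremal graph `G`, with cut vertex `w` and `m ≥ 3` vertices.

An ear argument (`IsBlock.path_subset`) shows that a path between two vertices of a block stays in
the block, so `w` is the only vertex of `B` with neighbours outside `B`. Hence the edges inside `B`
can be replaced by those of any connected graph `T` on `B` which has no cut vertex except possibly
`w`; this changes neither connectedness nor the set of cut vertices
(`cutVertexCount_replaceBlock`). Every distance splits into a part inside `B` and a part outside,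
glued at `w`, so the double sum of distances is a constant plus
`∑ x, D_T x + 2 (n - m) D_T w`, where `D_T` denotes the transmission in `T`. Consequently, if the
transmissions of `T` dominate those of `G[B]`, strictly somewhere, then the Wiener index increases
(`wienerIndex_lt_replaceBlock`), which extremality forbids.

In a graph on `m` vertices without cut vertices each distance level of a vertex has at least two
elements, except possibly the last one. So every transmission is at most the transmission
`cycleSum m` in the cycle `C_m`, and it is strictly smaller at a vertex of degree at least three.

For `m = 3`, take `T` to be the path on three vertices centred at `w`: its transmissions are at
least `2 = cycleSum 3`, and those of the ends are `3`, a contradiction. For `m ≥ 4`, take `T` to be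
a cycle: extremality excludes vertices of degree at least three, so `G[B]` is a connected graph of
maximum degree two without cut vertices, that is, a cycle (`nonempty_iso_cycleGraph`).
-/

open SimpleGraph

variable {V : Type*}

/-- The distance (transmission) of a vertex `v`: the sum of distances from `v`
to all other vertices. -/
noncomputable def vertexDistance [Fintype V] (G : SimpleGraph V) (v : V) : ℕ :=
  ∑ u : V, G.dist v u

/-- The Wiener index: the sum of distances over all unordered pairs of vertices. -/
noncomputable def wienerIndex [Fintype V] (G : SimpleGraph V) : ℕ :=
  (∑ u : V, ∑ v : V, G.dist u v) / 2

/-- `v` is a cut vertex of `G` if deleting it leaves a disconnected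
(or empty) graph. -/
def IsCutVertex (G : SimpleGraph V) (v : V) : Prop :=
  ¬ (G.induce ({v}ᶜ : Set V)).Connected

/-- The number of cut vertices of `G`. -/
noncomputable def cutVertexCount (G : SimpleGraph V) : ℕ :=
  {v : V | IsCutVertex G v}.ncard

/-- `B` is (the vertex set of) a block of `G`: a maximal connected subgraph on at
least two vertices that has no cut vertex of its own. -/
def IsBlock (G : SimpleGraph V) (B : Set V) : Prop :=
  2 ≤ B.ncard ∧ (G.induce B).Connected ∧
    (∀ v : B, ¬ IsCutVertex (G.induce B) v) ∧
    ∀ C : Set V, B ⊆ C → (G.induce C).Connected →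
      (∀ v : C, ¬ IsCutVertex (G.induce C) v) → C = B

/-- A pendant block: a block containing exactly one cut vertex of `G`. -/
def IsPendantBlock (G : SimpleGraph V) (B : Set V) : Prop :=
  IsBlock G B ∧ {v ∈ B | IsCutVertex G v}.ncard = 1

/-- An s-pendant block: a pendant block which shares its cut vertex with exactly
one non-pendant block of `G`. -/
def IsSPendantBlock (G : SimpleGraph V) (B : Set V) : Prop :=
  IsPendantBlock G B ∧
    ∀ w ∈ B, IsCutVertex G w →
      {C : Set V | IsBlock G C ∧ ¬ IsPendantBlock G C ∧ w ∈ C}.ncard = 1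

/-- The graph `L_{n,g}`: a cycle `C_g` on the vertices `0, …, g-1` (consecutive
edges together with the chord `{0, g-1}`) with the path `g-1, g, …, n-1`
attached at the vertex `g-1`.  For `g < n` its unique pendant vertex is `n-1`.
For `g = n` this is the cycle `C_n`. -/
def lollipop (n g : ℕ) : SimpleGraph (Fin n) :=
  SimpleGraph.fromRel (fun i j =>
    (i : ℕ) + 1 = (j : ℕ) ∨ ((i : ℕ) = 0 ∧ (j : ℕ) = g - 1))

/-- The cycle `C_n` on `n` vertices. -/
def cycleG (n : ℕ) : SimpleGraph (Fin n) := lollipop n n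

/-- The graph `C_{m₁,m₂}ⁿ`: a cycle `C_{m₁}` on `0, …, m₁-1`, a cycle `C_{m₂}`
on `n-m₂, …, n-1`, joined by the path `m₁-1, m₁, …, n-m₂` (which degenerates to
a single identified vertex when `n = m₁+m₂-1`). -/
def dumbbell (n m₁ m₂ : ℕ) : SimpleGraph (Fin n) :=
  SimpleGraph.fromRel (fun i j =>
    (i : ℕ) + 1 = (j : ℕ) ∨ ((i : ℕ) = 0 ∧ (j : ℕ) = m₁ - 1)
      ∨ ((i : ℕ) = n - m₂ ∧ (j : ℕ) = n - 1))

/-- Identify the vertex `w` of `H` with the vertex `u` of `G`:  the resulting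
graph on `U ⊕ {x : W // x ≠ w}` whose edges are those of `G`, those of `H` not
meeting `w`, and the edges of `H` at `w` re-attached at `u`. -/
def glue {U W : Type*} (G : SimpleGraph U) (u : U) (H : SimpleGraph W) (w : W) :
    SimpleGraph (U ⊕ {x : W // x ≠ w}) :=
  SimpleGraph.fromRel (fun a b =>
    match a, b with
    | Sum.inl x, Sum.inl y => G.Adj x y
    | Sum.inl x, Sum.inr y => x = u ∧ H.Adj w y.val
    | Sum.inr x, Sum.inr y => H.Adj x.val y.val
    | _, _ => False)

/-! ### Maps that preserve reachability, and Lipschitz functions -/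

/-- A map sending edges to reachable pairs sends reachable pairs to reachable pairs. -/
lemma reachable_of_adj_reachable {X Y : Type*} {P : SimpleGraph X} {Q : SimpleGraph Y}
    (f : X → Y) (hf : ∀ a b, P.Adj a b → Q.Reachable (f a) (f b)) {a b : X}
    (h : P.Reachable a b) : Q.Reachable (f a) (f b) := by
  obtain ⟨p⟩ := h
  induction p with
  | nil => exact Reachable.refl _
  | cons h _ ih => exact (hf _ _ h).trans ih

lemma connected_of_surjective {X Y : Type*} {P : SimpleGraph X} {Q : SimpleGraph Y}
    (f : X → Y) (hs : Function.Surjective f)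
    (hf : ∀ a b, P.Adj a b → Q.Reachable (f a) (f b)) (h : P.Connected) : Q.Connected := by
  have : Nonempty Y := h.nonempty.map f
  refine ⟨fun x y => ?_⟩
  obtain ⟨a, rfl⟩ := hs x
  obtain ⟨b, rfl⟩ := hs y
  exact reachable_of_adj_reachable f hf (h.preconnected a b)

lemma lipschitz_le_dist {X : Type*} {P : SimpleGraph X} (hP : P.Connected) (φ : X → ℕ)
    (hφ : ∀ a b, P.Adj a b → φ b ≤ φ a + 1) (a b : X) : φ b ≤ φ a + P.dist a b := by
  obtain ⟨p, hp⟩ := hP.exists_walk_length_eq_dist a b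
  rw [← hp]
  clear hp
  induction p with
  | nil => simp
  | cons h _ ih =>
    have := hφ _ _ h
    rw [Walk.length_cons]
    omega

/-- A discrete intermediate value theorem. -/
lemma exists_eq_of_lipschitz {X : Type*} {P : SimpleGraph X} (hP : P.Connected) (φ : X → ℕ)
    (hφ : ∀ a b, P.Adj a b → φ b ≤ φ a + 1) (a b : X) (s : ℕ) (ha : φ a ≤ s) (hb : s ≤ φ b) :
    ∃ y, φ y = s := by
  obtain ⟨p⟩ := hP.preconnected a b
  induction p with
  | nil => exact ⟨_, le_antisymm ha hb⟩
  | @cons u v _ h _ ih =>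
    by_cases hv : φ v ≤ s
    · exact ih hv hb
    · have := hφ _ _ h
      exact ⟨u, by omega⟩

lemma dist_le_succ {X : Type*} {P : SimpleGraph X} (hP : P.Connected) (v a b : X)
    (h : P.Adj a b) : P.dist v b ≤ P.dist v a + 1 := by
  have := hP.dist_triangle (u := v) (v := a) (w := b)
  rw [dist_eq_one_iff_adj.mpr h] at this
  exact this

/-! ### Transmissions in graphs without cut vertices -/

/-- The transmission of any vertex of the cycle `C_m`. -/
def cycleSum (m : ℕ) : ℕ := ∑ r ∈ Finset.range m, min r (m - r)

lemma cycleSum_eq (m : ℕ) : cycleSum m = ∑ t ∈ Finset.range m, (m - 1 - 2 * t) := by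
  induction m using Nat.twoStepInduction with
  | zero => rfl
  | one => rfl
  | more m ih _ =>
    have h1 : cycleSum (m + 2) = cycleSum m + (m + 1) := by
      unfold cycleSum
      rw [Finset.sum_range_succ, Finset.sum_range_succ']
      have : ∀ r ∈ Finset.range m, min (r + 1) (m + 2 - (r + 1)) = min r (m - r) + 1 := by
        intro r hr
        have := Finset.mem_range.mp hr
        omega
      rw [Finset.sum_congr rfl this, Finset.sum_add_distrib]
      simp
      omega
    have h2 : ∑ t ∈ Finset.range (m + 2), (m + 2 - 1 - 2 * t)
        = ∑ t ∈ Finset.range m, (m - 1 - 2 * t) + (m + 1) := by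
      rw [Finset.sum_range_succ', Finset.sum_range_succ]
      have : ∀ r ∈ Finset.range m, m + 2 - 1 - 2 * (r + 1) = m - 1 - 2 * r := by
        intro r hr
        omega
      rw [Finset.sum_congr rfl this]
      omega
    rw [h1, h2, ih]

/-- The number of vertices at distance more than `t` from `v`. -/
noncomputable def farCount {W : Type*} (T : SimpleGraph W) (v : W) (t : ℕ) : ℕ :=
  {u : W | t < T.dist v u}.ncard

section TwoConnected

variable {W : Type*} [Fintype W] {T : SimpleGraph W}

lemma vertexDistance_eq_sum_farCount (hT : T.Connected) (v : W) :
    vertexDistance T v = ∑ t ∈ Finset.range (Fintype.card W), farCount T v t := by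
  classical
  have hlt : ∀ u, T.dist v u < Fintype.card W := by
    intro u
    obtain ⟨p, hp, hl⟩ := hT.exists_path_of_dist v u
    rw [← hl]
    exact hp.length_lt
  have h1 : ∀ u, T.dist v u
      = ∑ t ∈ Finset.range (Fintype.card W), if t < T.dist v u then 1 else 0 := by
    intro u
    rw [← Finset.sum_filter, Finset.sum_const, smul_eq_mul, mul_one]
    have : (Finset.range (Fintype.card W)).filter (fun t => t < T.dist v u)
        = Finset.range (T.dist v u) := by
      ext t
      have := hlt u
      simp only [Finset.mem_filter, Finset.mem_range]
      omega
    rw [this, Finset.card_range]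
  unfold vertexDistance
  rw [Finset.sum_congr rfl (fun u _ => h1 u), Finset.sum_comm]
  refine Finset.sum_congr rfl fun t _ => ?_
  rw [farCount, ← Finset.sum_filter, Finset.sum_const, smul_eq_mul, mul_one,
    Set.ncard_eq_toFinset_card']
  congr 1
  ext u
  simp

lemma farCount_zero (hT : T.Connected) (v : W) : farCount T v 0 = Fintype.card W - 1 := by
  have : {u : W | 0 < T.dist v u} = {v}ᶜ := by
    ext u
    simp only [Set.mem_ofPred_eq, Set.mem_compl_iff, Set.mem_singleton_iff]
    rw [Nat.pos_iff_ne_zero, Ne, hT.dist_eq_zero_iff, eq_comm]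
  rw [farCount, this, Set.ncard_compl, Set.ncard_singleton, Nat.card_eq_fintype_card]

/-- Every nonempty distance level strictly between `v` and a farther vertex has at least two
elements, since a single one would separate `v` from that vertex. -/
lemma farCount_succ (hT : T.Connected) (h2 : ∀ v, (T.induce ({v}ᶜ : Set W)).Connected)
    (v : W) (t : ℕ) : farCount T v (t + 1) ≤ farCount T v t - 2 := by
  by_cases hne : {u : W | t + 1 < T.dist v u}.Nonempty
  · obtain ⟨z, hz⟩ := hne
    simp only [Set.mem_ofPred_eq] at hz
    obtain ⟨c, hc⟩ := exists_eq_of_lipschitz hT (T.dist v) (dist_le_succ hT v) v z (t + 1)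
      (by simp) hz.le
    have hcv : v ≠ c := by rintro rfl; simp at hc
    have hcz : z ≠ c := by rintro rfl; omega
    obtain ⟨⟨y, hyc⟩, hy⟩ := exists_eq_of_lipschitz (h2 c) (fun x => T.dist v x.1)
      (fun a b h => dist_le_succ hT v a.1 b.1 h) ⟨v, hcv⟩ ⟨z, hcz⟩ (t + 1) (by simp) hz.le
    simp only [Set.mem_compl_iff, Set.mem_singleton_iff] at hyc hy
    have hsub : {u : W | t + 1 < T.dist v u} ∪ {c, y} ⊆ {u : W | t < T.dist v u} := by
      rintro u (hu | rfl | rfl)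
      · simp only [Set.mem_ofPred_eq] at hu ⊢
        omega
      · simp [hc]
      · simp [hy]
    have hdis : Disjoint {u : W | t + 1 < T.dist v u} {c, y} := by
      rw [Set.disjoint_left]
      rintro u hu (rfl | rfl) <;> simp only [Set.mem_ofPred_eq] at hu <;> omega
    have := Set.ncard_le_ncard hsub (Set.toFinite _)
    rw [Set.ncard_union_eq hdis (Set.toFinite _) (Set.toFinite _),
      Set.ncard_pair (Ne.symm hyc)] at this
    unfold farCount
    omega
  · rw [farCount, Set.not_nonempty_iff_eq_empty.mp hne, Set.ncard_empty]
    exact Nat.zero_le _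

lemma farCount_le (hT : T.Connected) (h2 : ∀ v, (T.induce ({v}ᶜ : Set W)).Connected)
    (v : W) (t : ℕ) : farCount T v t ≤ Fintype.card W - 1 - 2 * t := by
  induction t with
  | zero => rw [farCount_zero hT]; omega
  | succ t ih =>
    have := farCount_succ hT h2 v t
    omega

lemma vertexDistance_le_cycleSum (hT : T.Connected)
    (h2 : ∀ v, (T.induce ({v}ᶜ : Set W)).Connected) (v : W) :
    vertexDistance T v ≤ cycleSum (Fintype.card W) := by
  rw [vertexDistance_eq_sum_farCount hT, cycleSum_eq]
  exact Finset.sum_le_sum fun t _ => farCount_le hT h2 v t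

lemma vertexDistance_lt_cycleSum (hT : T.Connected)
    (h2 : ∀ v, (T.induce ({v}ᶜ : Set W)).Connected) (v : W)
    (h3 : 3 ≤ (T.neighborSet v).ncard) :
    vertexDistance T v < cycleSum (Fintype.card W) := by
  have hdis : Disjoint {u : W | 1 < T.dist v u} (T.neighborSet v) := by
    rw [Set.disjoint_left]
    intro u hu hu'
    have := dist_eq_one_iff_adj.mpr hu'
    simp only [Set.mem_ofPred_eq] at hu
    omega
  have hsub : {u : W | 1 < T.dist v u} ∪ T.neighborSet v ⊆ {u : W | 0 < T.dist v u} := by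
    rintro u (hu | hu)
    · simp only [Set.mem_ofPred_eq] at hu ⊢
      omega
    · have := dist_eq_one_iff_adj.mpr hu
      simp only [Set.mem_ofPred_eq]
      omega
  have h := Set.ncard_le_ncard hsub (Set.toFinite _)
  rw [Set.ncard_union_eq hdis (Set.toFinite _) (Set.toFinite _)] at h
  have h0 := farCount_zero hT v
  change farCount T v 1 + _ ≤ farCount T v 0 at h
  rw [vertexDistance_eq_sum_farCount hT, cycleSum_eq]
  refine Finset.sum_lt_sum (fun t _ => farCount_le hT h2 v t)
    ⟨1, Finset.mem_range.mpr (by omega), by omega⟩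

/-- A connected graph of maximum degree two without cut vertices, on at least three vertices, is a
cycle. -/
lemma nonempty_iso_cycleGraph (hm : 3 ≤ Fintype.card W) (hT : T.Connected)
    (h2 : ∀ v, (T.induce ({v}ᶜ : Set W)).Connected)
    (h3 : ∀ v, (T.neighborSet v).ncard < 3) :
    Nonempty (T ≃g cycleGraph (Fintype.card W)) := by
  classical
  have : Nontrivial W := Fintype.one_lt_card_iff_nontrivial.mp (by omega)
  have hdeg : ∀ v, (T.neighborSet v).ncard = 2 := by
    intro v
    obtain ⟨c, hc⟩ := hT.preconnected.exists_adj_of_nontrivial v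
    -- If `c` were the only neighbour of `v`, deleting `c` would isolate `v`.
    obtain ⟨z, hz⟩ : ∃ z, z ∉ ({v, c} : Finset W) := by
      by_contra! h
      have := Finset.card_le_card (fun x _ => h x : (Finset.univ : Finset W) ⊆ {v, c})
      have h' := Finset.card_le_two (a := v) (b := c)
      rw [Finset.card_univ] at this
      omega
    simp only [Finset.mem_insert, Finset.mem_singleton, not_or] at hz
    have : Nontrivial ({c}ᶜ : Set W) :=
      ⟨⟨v, hc.ne⟩, ⟨z, hz.2⟩, fun h => hz.1 (Subtype.ext_iff.mp h).symm⟩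
    obtain ⟨⟨d, hd⟩, hvd⟩ := (h2 c).preconnected.exists_adj_of_nontrivial ⟨v, hc.ne⟩
    have hsub : ({c, d} : Set W) ⊆ T.neighborSet v := by
      rintro x (rfl | rfl)
      · exact hc
      · exact hvd
    have := Set.ncard_le_ncard hsub (Set.toFinite _)
    rw [Set.ncard_pair (Ne.symm hd)] at this
    have := h3 v
    omega
  have hcyc : T.IsCycles := fun v _ => hdeg v
  obtain ⟨v⟩ := hT.nonempty
  obtain ⟨p, hp, hverts⟩ := hcyc.exists_cycle_toSubgraph_verts_eq_connectedComponentSupp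
    (c := T.connectedComponentMk v) (v := v) rfl
    (Set.nonempty_of_ncard_ne_zero (by rw [hdeg v]; omega))
  have hall : ∀ x, x ∈ p.support := by
    intro x
    rw [← Walk.mem_verts_toSubgraph, hverts]
    exact ConnectedComponent.sound (hT.preconnected x v)
  have hham : p.IsHamiltonianCycle := by
    rw [Walk.isHamiltonianCycle_iff_isCycle_and_support_count_tail_eq_one]
    refine ⟨hp, fun a => List.count_eq_one_of_mem hp.support_nodup ?_⟩
    have := hall a
    rw [Walk.mem_support_iff] at this
    rcases this with rfl | h
    · exact Walk.end_mem_tail_support hp.not_nil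
    · exact h
  obtain ⟨f⟩ := (cycleGraph_isContained_iff (G := T) (n := Fintype.card W) (by omega)).mpr
    ⟨v, p, hp, hham.length_eq⟩
  have hbij : Function.Bijective f :=
    (Fintype.bijective_iff_injective_and_card f).mpr ⟨f.injective, by simp⟩
  refine ⟨(RelIso.symm ⟨Equiv.ofBijective f hbij, ?_⟩ : T ≃g _)⟩
  intro a b
  refine ⟨fun h => ?_, fun h => f.toHom.map_adj h⟩
  -- The two cycle neighbours of `a` account for all neighbours of its image.
  have hsub : f '' ((cycleGraph (Fintype.card W)).neighborSet a) ⊆ T.neighborSet (f a) := by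
    rintro _ ⟨x, hx, rfl⟩
    exact f.toHom.map_adj hx
  have hca : ((cycleGraph (Fintype.card W)).neighborSet a).ncard = 2 := by
    generalize Fintype.card W = m at *
    obtain ⟨m, rfl⟩ : ∃ m', m = m' + 3 := ⟨m - 3, by omega⟩
    rw [Set.ncard_eq_toFinset_card', ← cycleGraph_degree_three_le (v := a)]
    rfl
  have heq := Set.eq_of_subset_of_ncard_le hsub
    (by rw [Set.ncard_image_of_injective (f := f) _ hbij.injective, hca, hdeg]) (Set.toFinite _)
  have hb : f b ∈ T.neighborSet (f a) := h
  rw [← heq] at hb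
  obtain ⟨x, hx, hxb⟩ := hb
  rw [hbij.injective hxb] at hx
  exact hx

end TwoConnected

/-! ### The cycle -/

lemma cycleG_eq_cycleGraph (m : ℕ) (hm : 2 ≤ m) : cycleG m = cycleGraph m := by
  ext a b
  rw [cycleGraph_adj']
  simp only [cycleG, lollipop, fromRel_adj, ne_eq, Fin.ext_iff]
  have ha := a.2
  have hb := b.2
  rcases lt_trichotomy a b with h | h | h
  · rw [Fin.coe_sub_iff_lt.mpr h, Fin.coe_sub_iff_le.mpr h.le]
    have : (a : ℕ) < b := h
    omega
  · subst h
    rw [Fin.coe_sub_iff_le.mpr le_rfl]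
    omega
  · rw [Fin.coe_sub_iff_lt.mpr h, Fin.coe_sub_iff_le.mpr h.le]
    have : (b : ℕ) < a := h
    omega

open Fin.CommRing in
lemma cycleGraph_del_connected (m : ℕ) (hm : 2 ≤ m) (v : Fin m) :
    ((cycleGraph m).induce ({v}ᶜ : Set (Fin m))).Connected := by
  obtain ⟨m, rfl⟩ : ∃ m', m = m' + 2 := ⟨m - 2, by omega⟩
  have hne : ∀ i : ℕ, i + 1 < m + 2 → v + ((i + 1 : ℕ) : Fin (m + 2)) ∈ ({v}ᶜ : Set _) := by
    intro i hi h
    simp only [Set.mem_singleton_iff, add_eq_left] at h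
    have := congrArg Fin.val h
    rw [Fin.val_natCast, Nat.mod_eq_of_lt hi] at this
    simp at this
  have hreach : ∀ i : ℕ, ∀ hi : i + 1 < m + 2,
      ((cycleGraph (m + 2)).induce ({v}ᶜ : Set (Fin (m + 2)))).Reachable
        ⟨_, hne 0 (by omega)⟩ ⟨_, hne i hi⟩ := by
    intro i
    induction i with
    | zero => intro hi; exact Reachable.refl _
    | succ i ih =>
      intro hi
      refine (ih (by omega)).trans (Adj.reachable ?_)
      change (cycleGraph (m + 2)).Adj (v + ((i + 1 : ℕ) : Fin (m + 2)))
        (v + ((i + 1 + 1 : ℕ) : Fin (m + 2)))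
      rw [cycleGraph_adj]
      right
      push_cast
      ring
  rw [connected_iff_exists_forall_reachable]
  refine ⟨⟨_, hne 0 (by omega)⟩, ?_⟩
  rintro ⟨x, hx⟩
  have hx' : x - v ≠ 0 := sub_ne_zero.mpr hx
  have hpos : 0 < (x - v).val := Nat.pos_of_ne_zero fun h => hx' (Fin.ext h)
  have hlt := (x - v).2
  have hrep : v + (((x - v).val - 1 + 1 : ℕ) : Fin (m + 2)) = x := by
    rw [Nat.sub_add_cancel hpos, Fin.cast_val_eq_self]
    ring
  have := hreach ((x - v).val - 1) (by omega)
  simp only [hrep] at this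
  exact this

lemma cycleSum_le_vertexDistance (m : ℕ) (hm : 2 ≤ m) (v : Fin m) :
    cycleSum m ≤ vertexDistance (cycleGraph m) v := by
  obtain ⟨m, rfl⟩ : ∃ m', m = m' + 2 := ⟨m - 2, by omega⟩
  -- The circular distance from `v` is a Lipschitz function vanishing at `v`.
  have hφ : ∀ a b : Fin (m + 2), (cycleGraph (m + 2)).Adj a b →
      min (b - v).val (m + 2 - (b - v).val) ≤ min (a - v).val (m + 2 - (a - v).val) + 1 := by
    intro a b h
    rw [cycleGraph_adj] at h
    rcases h with h | h
    · have : a - v = (b - v) + 1 := by rw [← h]; abel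
      rw [this, Fin.val_add_one]
      have := (b - v).2
      split_ifs with hl
      · rw [hl, Fin.val_last]; omega
      · omega
    · have : b - v = (a - v) + 1 := by rw [← h]; abel
      rw [this, Fin.val_add_one]
      have := (a - v).2
      split_ifs with hl
      · omega
      · omega
  have hle : ∀ u, min (u - v).val (m + 2 - (u - v).val) ≤ (cycleGraph (m + 2)).dist v u := by
    intro u
    have := lipschitz_le_dist (cycleGraph_connected (n := m + 1)) _ hφ v u
    simpa using this
  calc cycleSum (m + 2) = ∑ r : Fin (m + 2), min r.val (m + 2 - r.val) := by
        rw [cycleSum, Finset.sum_range]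
    _ = ∑ u : Fin (m + 2), min (u - v).val (m + 2 - (u - v).val) :=
        ((Equiv.subRight v).sum_comp (fun r : Fin (m + 2) => min r.val (m + 2 - r.val))).symm
    _ ≤ _ := Finset.sum_le_sum fun u _ => hle u

/-! ### Ears and blocks -/

/-- After deleting a vertex `c` of a path, each remaining vertex of the path is still joined
within the path to one of its ends. -/
lemma path_reach_end {V : Type*} {G : SimpleGraph V} {x b : V} (p : G.Walk x b) (hp : p.IsPath)
    {c z : V} (hz : z ∈ p.support) (hzc : z ≠ c) :
    ∃ e, (e = x ∨ e = b) ∧ ∃ q : G.Walk e z, c ∉ q.support ∧ q.support ⊆ p.support := by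
  classical
  by_cases hc : c ∈ (p.takeUntil z hz).support
  · refine ⟨b, Or.inr rfl, (p.dropUntil z hz).reverse, ?_, ?_⟩
    · rw [Walk.support_reverse, List.mem_reverse]
      intro hc'
      rw [← p.take_spec hz, Walk.isPath_def, Walk.support_append] at hp
      have hdis := (List.nodup_append'.mp hp).2.2
      rw [Walk.mem_support_iff] at hc'
      rcases hc' with h | h
      · exact hzc h.symm
      · exact hdis hc h
    · rw [Walk.support_reverse]
      intro y hy
      exact p.support_dropUntil_subset_support hz (List.mem_reverse.mp hy)
  · exact ⟨x, Or.inl rfl, p.takeUntil z hz, hc, p.support_takeUntil_subset_support hz⟩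

/-- Deleting a vertex inside an induced subgraph is the same as inducing on a smaller set. -/
lemma connected_del_induce_iff {V : Type*} (G : SimpleGraph V) (B : Set V) (v : B) :
    ((G.induce B).induce ({v}ᶜ : Set B)).Connected ↔ (G.induce (B \ {v.1})).Connected := by
  constructor
  · intro h
    refine connected_of_surjective (fun x => ⟨x.1.1, x.1.2, fun hx => x.2 (Subtype.ext hx)⟩)
      ?_ (fun a b hab => Adj.reachable hab) h
    rintro ⟨x, hx, hxv⟩
    exact ⟨⟨⟨x, hx⟩, fun h => hxv (congrArg Subtype.val h)⟩, rfl⟩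
  · intro h
    refine connected_of_surjective
      (fun x => ⟨⟨x.1, x.2.1⟩, fun hx => x.2.2 (congrArg Subtype.val hx)⟩)
      ?_ (fun a b hab => Adj.reachable hab) h
    rintro ⟨⟨x, hx⟩, hxv⟩
    exact ⟨⟨x, hx, fun h => hxv (Subtype.ext h)⟩, rfl⟩

/-- A path between two vertices of a block stays inside the block: otherwise adding the path
would give a larger subgraph without cut vertices. -/
lemma IsBlock.path_subset {V : Type*} {G : SimpleGraph V} {B : Set V} (hB : IsBlock G B)
    {x b : V} (hx : x ∈ B) (hb : b ∈ B) (p : G.Walk x b) (hp : p.IsPath) :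
    ∀ z ∈ p.support, z ∈ B := by
  obtain ⟨hcard, hconn, hnocut, hmaxl⟩ := hB
  have hdel : ∀ c, (G.induce (B \ {c})).Connected := by
    intro c
    by_cases hc : c ∈ B
    · have := hnocut ⟨c, hc⟩
      rw [IsCutVertex, not_not] at this
      exact (connected_del_induce_iff G B ⟨c, hc⟩).mp this
    · rwa [Set.sdiff_singleton_eq_self hc]
  set C : Set V := B ∪ {z | z ∈ p.support} with hC
  have hCconn : (G.induce C).Connected :=
    induce_union_connected hconn.preconnected p.connected_induce_support.preconnected
      ⟨x, hx, p.start_mem_support⟩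
  have hCdel : ∀ c, (G.induce (C \ {c})).Connected := by
    intro c
    obtain ⟨u, hu⟩ := (hdel c).nonempty
    have hmono : B \ {c} ⊆ C \ {c} := Set.sdiff_subset_sdiff_left Set.subset_union_left
    refine induce_connected_of_patches u (hmono hu) ?_
    rintro z ⟨hz | hz, hzc⟩
    · exact ⟨B \ {c}, hmono, hu, ⟨hz, hzc⟩, (hdel c).preconnected _ _⟩
    · obtain ⟨e, he, q, hq, hqp⟩ := path_reach_end p hp hz hzc
      have heB : e ∈ B \ {c} := by
        refine ⟨?_, fun h => hq ?_⟩
        · rcases he with rfl | rfl <;> assumption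
        · rw [← Set.mem_singleton_iff.mp h]
          exact q.start_mem_support
      refine ⟨(B \ {c}) ∪ {y | y ∈ q.support}, ?_, Or.inl hu, Or.inr q.end_mem_support, ?_⟩
      · rintro y (hy | hy)
        · exact hmono hy
        · refine ⟨Or.inr (hqp hy), fun h => hq ?_⟩
          rw [← Set.mem_singleton_iff.mp h]
          exact hy
      · exact (induce_union_connected (hdel c).preconnected
          q.connected_induce_support.preconnected ⟨e, heB, q.start_mem_support⟩).preconnected _ _
  have := hmaxl C Set.subset_union_left hCconn
    (fun v => not_not.mpr ((connected_del_induce_iff G C v).mpr (hCdel v)))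
  intro z hz
  rw [← this]
  exact Or.inr hz

/-- A block vertex that is not a cut vertex has no neighbour outside the block. -/
lemma IsBlock.not_adj {V : Type*} {G : SimpleGraph V} {B : Set V} (hB : IsBlock G B)
    {w x y : V} (hw : w ∈ B) (hx : x ∈ B) (hxw : x ≠ w) (hcut : ¬ IsCutVertex G x)
    (hy : y ∉ B) : ¬ G.Adj x y := by
  classical
  intro hadj
  rw [IsCutVertex, not_not] at hcut
  obtain ⟨q, hq, hxq⟩ : ∃ q : G.Walk y w, q.IsPath ∧ x ∉ q.support := by
    have hyx : y ∈ ({x}ᶜ : Set V) := hadj.ne'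
    have hwx : w ∈ ({x}ᶜ : Set V) := hxw.symm
    obtain ⟨q, hq⟩ := hcut.preconnected.exists_isPath ⟨y, hyx⟩ ⟨w, hwx⟩
    have hs : ∀ z ∈ (q.map (Embedding.induce (G := G) ({x}ᶜ : Set V)).toHom).support, z ≠ x := by
      intro z hz
      rw [Walk.support_map, List.mem_map] at hz
      obtain ⟨a, -, rfl⟩ := hz
      exact a.2
    exact ⟨q.map (Embedding.induce (G := G) ({x}ᶜ : Set V)).toHom,
      hq.map (Embedding.induce (G := G) ({x}ᶜ : Set V)).injective, fun h => hs x h rfl⟩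
  exact hy (hB.path_subset hx hw (Walk.cons hadj q)
    ((Walk.cons_isPath_iff _ _).mpr ⟨hq, hxq⟩) y (by simp))

/-! ### Replacing the edges inside a pendant block -/

section Replace

variable {V : Type*}

/-- The graph obtained from `G` by replacing the subgraph induced on `B` by `T`. -/
def replaceBlock (G : SimpleGraph V) (B : Set V) (T : SimpleGraph B) : SimpleGraph V where
  Adj a b := (G.Adj a b ∧ ¬ (a ∈ B ∧ b ∈ B)) ∨ ∃ (ha : a ∈ B) (hb : b ∈ B), T.Adj ⟨a, ha⟩ ⟨b, hb⟩
  symm := ⟨by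
    rintro a b (⟨h, hn⟩ | ⟨ha, hb, h⟩)
    · exact Or.inl ⟨h.symm, fun hab => hn hab.symm⟩
    · exact Or.inr ⟨hb, ha, h.symm⟩⟩
  loopless := ⟨by
    rintro a (⟨h, -⟩ | ⟨ha, hb, h⟩)
    · exact h.ne rfl
    · exact h.ne rfl⟩

variable {G : SimpleGraph V} {B : Set V} {T : SimpleGraph B}

open Classical in
/-- The retraction onto `B` that collapses everything outside `B` to `w`. -/
noncomputable def toBlock (B : Set V) (w : B) (x : V) : B := if h : x ∈ B then ⟨x, h⟩ else w

open Classical in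
/-- The retraction onto the complement of `B` together with `w` that collapses `B` to `w`. -/
noncomputable def offBlock (B : Set V) (w : B) (x : V) : V := if x ∈ B then w else x

lemma toBlock_mem (w : B) {x : V} (hx : x ∈ B) : toBlock B w x = ⟨x, hx⟩ := dif_pos hx

lemma toBlock_notMem (w : B) {x : V} (hx : x ∉ B) : toBlock B w x = w := dif_neg hx

lemma offBlock_mem (w : B) {x : V} (hx : x ∈ B) : offBlock B w x = w := if_pos hx

lemma offBlock_notMem (w : B) {x : V} (hx : x ∉ B) : offBlock B w x = x := if_neg hx

/-- Only `w` has neighbours both inside and outside `B`. -/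
def Separates (G : SimpleGraph V) (B : Set V) (w : B) : Prop :=
  ∀ x ∈ B, x ≠ w → ∀ y, y ∉ B → ¬ G.Adj x y

variable {w : B}

/-- Every edge of the modified graph is either an edge of `T`, which the second retraction
collapses, or an edge of `G` whose two ends
are unchanged by the second retraction while the first one collapses it to `w`. -/
lemma replaceBlock_adj_cases (hsep : Separates G B w) {a b : V}
    (h : (replaceBlock G B T).Adj a b) :
    (T.Adj (toBlock B w a) (toBlock B w b) ∧ offBlock B w a = offBlock B w b) ∨
      (toBlock B w a = w ∧ toBlock B w b = w ∧ offBlock B w a = a ∧ offBlock B w b = b ∧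
        G.Adj a b ∧ ¬ (a ∈ B ∧ b ∈ B)) := by
  rcases h with ⟨h, hn⟩ | ⟨ha, hb, h⟩
  · right
    have key : ∀ {a b : V}, G.Adj a b → a ∈ B → b ∉ B → a = w := by
      intro a b h ha hb
      by_contra hne
      exact hsep a ha hne b hb h
    have hval : ∀ {a b : V}, G.Adj a b → ¬ (a ∈ B ∧ b ∈ B) →
        toBlock B w a = w ∧ offBlock B w a = a := by
      intro a b h hn
      by_cases ha : a ∈ B
      · have hb : b ∉ B := fun hb => hn ⟨ha, hb⟩
        have := key h ha hb
        exact ⟨by rw [toBlock_mem w ha]; exact Subtype.ext this,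
          by rw [offBlock_mem w ha]; exact this.symm⟩
      · exact ⟨toBlock_notMem w ha, offBlock_notMem w ha⟩
    obtain ⟨h1, h2⟩ := hval h hn
    obtain ⟨h3, h4⟩ := hval h.symm fun hab => hn hab.symm
    exact ⟨h1, h3, h2, h4, h, hn⟩
  · left
    rw [toBlock_mem w ha, toBlock_mem w hb, offBlock_mem w ha, offBlock_mem w hb]
    exact ⟨h, rfl⟩

lemma replaceBlock_induce (G : SimpleGraph V) (B : Set V) :
    replaceBlock G B (G.induce B) = G := by
  ext a b
  constructor
  · rintro (⟨h, -⟩ | ⟨_, _, h⟩)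
    · exact h
    · exact h
  · intro h
    by_cases hab : a ∈ B ∧ b ∈ B
    · exact Or.inr ⟨hab.1, hab.2, h⟩
    · exact Or.inl ⟨h, hab⟩

lemma replaceBlock_connected (hG : G.Connected) (hT : T.Connected) :
    (replaceBlock G B T).Connected := by
  refine connected_of_surjective id Function.surjective_id (fun a b h => ?_) hG
  by_cases hab : a ∈ B ∧ b ∈ B
  · exact reachable_of_adj_reachable (P := T) (Subtype.val : B → V)
      (fun x y hxy => Adj.reachable (Or.inr ⟨x.2, y.2, hxy⟩))
      (hT.preconnected ⟨a, hab.1⟩ ⟨b, hab.2⟩)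
  · exact Adj.reachable (Or.inl ⟨h, hab⟩)

/-- The sum on the left is, as a function of `v`, Lipschitz along the edges of the modified graph,
because each edge moves only one of the two retractions. -/
lemma le_dist_replaceBlock (hG : G.Connected) (hT : T.Connected) (hsep : Separates G B w)
    (u v : V) : T.dist (toBlock B w u) (toBlock B w v) + G.dist (offBlock B w u) (offBlock B w v)
      ≤ (replaceBlock G B T).dist u v := by
  have := lipschitz_le_dist (replaceBlock_connected (B := B) hG hT)
    (fun x => T.dist (toBlock B w u) (toBlock B w x) + G.dist (offBlock B w u) (offBlock B w x))
    ?_ u v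
  · simpa using this
  · intro a b h
    rcases replaceBlock_adj_cases hsep h with ⟨h1, h2⟩ | ⟨h1, h2, h3, h4, h5, -⟩
    · have := dist_le_succ hT (toBlock B w u) _ _ h1
      simp only [h2]
      omega
    · have := dist_le_succ hG (offBlock B w u) _ _ h5
      simp only [h1, h2, h3, h4]
      omega

lemma dist_le_of_induce (hG : G.Connected) (hB : (G.induce B).Connected) (u v : V) :
    G.dist u v ≤ (G.induce B).dist (toBlock B w u) (toBlock B w v)
      + G.dist (offBlock B w u) (offBlock B w v) := by
  have hle : ∀ x y : B, G.dist x y ≤ (G.induce B).dist x y := by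
    intro x y
    obtain ⟨p, hp⟩ := hB.exists_walk_length_eq_dist x y
    rw [← hp, ← Walk.length_map (Embedding.induce (G := G) B).toHom p]
    exact dist_le _
  by_cases hu : u ∈ B <;> by_cases hv : v ∈ B
  · rw [toBlock_mem w hu, toBlock_mem w hv, offBlock_mem w hu, offBlock_mem w hv, dist_self]
    exact hle ⟨u, hu⟩ ⟨v, hv⟩
  · rw [toBlock_mem w hu, toBlock_notMem w hv, offBlock_mem w hu, offBlock_notMem w hv]
    have h1 := hle ⟨u, hu⟩ w
    have h2 := hG.dist_triangle (u := u) (v := w) (w := v)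
    simp only at h1
    omega
  · rw [toBlock_mem w hv, toBlock_notMem w hu, offBlock_mem w hv, offBlock_notMem w hu]
    have h1 := hle w ⟨v, hv⟩
    have h2 := hG.dist_triangle (u := u) (v := w) (w := v)
    simp only at h1
    omega
  · rw [toBlock_notMem w hu, toBlock_notMem w hv, offBlock_notMem w hu, offBlock_notMem w hv,
      dist_self, zero_add]

/-! ### Cut vertices after the replacement -/

/-- Connectivity after deleting a vertex outside `B` does not depend on the connected graph
chosen on `B`. -/
lemma del_connected_of_notMem {S : SimpleGraph B} (hT : T.Connected) {v : V} (hv : v ∉ B)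
    (h : ((replaceBlock G B S).induce ({v}ᶜ : Set V)).Connected) :
    ((replaceBlock G B T).induce ({v}ᶜ : Set V)).Connected := by
  have hne : ∀ x : B, x.1 ∈ ({v}ᶜ : Set V) := fun x hx => hv (hx ▸ x.2)
  refine connected_of_surjective id Function.surjective_id ?_ h
  rintro ⟨a, ha⟩ ⟨b, hb⟩ (hab | ⟨haB, hbB, hab⟩)
  · exact Adj.reachable (Or.inl hab)
  · exact reachable_of_adj_reachable (P := T)
      (Q := (replaceBlock G B T).induce ({v}ᶜ : Set V)) (fun x => ⟨x.1, hne x⟩)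
      (fun x y hxy => Adj.reachable (Or.inr ⟨x.2, y.2, hxy⟩))
      (hT.preconnected ⟨a, haB⟩ ⟨b, hbB⟩)

lemma del_connected_of_mem (hG : G.Connected) (hsep : Separates G B w) (v : B) (hvw : v ≠ w)
    (hT : (T.induce ({v}ᶜ : Set B)).Connected) :
    ((replaceBlock G B T).induce ({v.1}ᶜ : Set V)).Connected := by
  have hwv : w.1 ∈ ({v.1}ᶜ : Set V) := fun h => hvw (Subtype.ext h.symm)
  have hoff : ∀ x, offBlock B w x ∈ ({v.1}ᶜ : Set V) := by
    intro x
    by_cases hx : x ∈ B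
    · rw [offBlock_mem w hx]; exact hwv
    · rw [offBlock_notMem w hx]; exact fun h => hx (h ▸ v.2)
  have hcollapse : ∀ x, ((replaceBlock G B T).induce ({v.1}ᶜ : Set V)).Reachable
      ⟨offBlock B w w, hoff w⟩ ⟨offBlock B w x, hoff x⟩ := by
    intro x
    refine reachable_of_adj_reachable (P := replaceBlock G B (G.induce B))
      (Q := (replaceBlock G B T).induce ({v.1}ᶜ : Set V)) (fun x => ⟨offBlock B w x, hoff x⟩) ?_
      (by rw [replaceBlock_induce]; exact hG.preconnected w x)
    intro a b hab
    rcases replaceBlock_adj_cases hsep hab with ⟨-, h⟩ | ⟨-, -, h3, h4, h5⟩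
    · simp only [h]
      exact Reachable.refl _
    · refine Adj.reachable (Or.inl ?_)
      simp only [Function.Embedding.subtype_apply, h3, h4]
      exact h5
  rw [connected_iff_exists_forall_reachable]
  refine ⟨⟨w, hwv⟩, ?_⟩
  rintro ⟨x, hx⟩
  by_cases hxB : x ∈ B
  · exact reachable_of_adj_reachable (P := T.induce ({v}ᶜ : Set B))
      (Q := (replaceBlock G B T).induce ({v.1}ᶜ : Set V))
      (fun y => ⟨y.1.1, fun h => y.2 (Subtype.ext h)⟩)
      (fun y z hyz => Adj.reachable (Or.inr ⟨y.1.2, z.1.2, hyz⟩))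
      (hT.preconnected ⟨w, hvw.symm⟩ ⟨⟨x, hxB⟩, fun h => hx (congrArg Subtype.val h)⟩)
  · have := hcollapse x
    simp only [offBlock_mem w w.2, offBlock_notMem w hxB] at this
    exact this

lemma isCutVertex_replaceBlock (hsep : Separates G B w) {x y : V} (hx : x ∈ B) (hxw : x ≠ w)
    (hy : y ∉ B) : IsCutVertex (replaceBlock G B T) w := by
  intro hconn
  have hmem : ∀ a b : ({w.1}ᶜ : Set V),
      ((replaceBlock G B T).induce ({w.1}ᶜ : Set V)).Adj a b → a.1 ∈ B → b.1 ∈ B := by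
    rintro ⟨a, ha⟩ ⟨b, hb⟩ (⟨h, -⟩ | ⟨-, hbB, -⟩) haB
    · by_contra hbB
      exact hsep a haB ha b hbB h
    · exact hbB
  obtain ⟨p⟩ := hconn.preconnected ⟨x, hxw⟩ ⟨y, fun h => hy (h ▸ w.2)⟩
  have : ∀ a b : ({w.1}ᶜ : Set V),
      ((replaceBlock G B T).induce ({w.1}ᶜ : Set V)).Walk a b → a.1 ∈ B → b.1 ∈ B := by
    intro a b q
    induction q with
    | nil => exact id
    | cons h _ ih => exact fun haB => ih (hmem _ _ h haB)
  exact hy (this _ _ p hx)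

lemma cutVertexCount_replaceBlock (hG : G.Connected) (hB : (G.induce B).Connected)
    (hsep : Separates G B w) (hcutw : IsCutVertex G w)
    (hncut : ∀ v ∈ B, v ≠ w → ¬ IsCutVertex G v)
    (hT : T.Connected) (hTdel : ∀ v : B, v ≠ w → (T.induce ({v}ᶜ : Set B)).Connected)
    {x y : V} (hx : x ∈ B) (hxw : x ≠ w) (hy : y ∉ B) :
    cutVertexCount (replaceBlock G B T) = cutVertexCount G := by
  unfold cutVertexCount
  congr 1
  ext v
  simp only [Set.mem_ofPred_eq]
  by_cases hv : v ∈ B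
  · by_cases hvw : v = w
    · subst hvw
      exact iff_of_true (isCutVertex_replaceBlock hsep hx hxw hy) hcutw
    · refine iff_of_false (not_not.mpr ?_) (hncut v hv hvw)
      have hvw' : (⟨v, hv⟩ : B) ≠ w := fun h => hvw (congrArg Subtype.val h)
      exact del_connected_of_mem hG hsep ⟨v, hv⟩ hvw' (hTdel _ hvw')
  · refine not_congr ⟨fun h => ?_, fun h => ?_⟩
    · have := del_connected_of_notMem hB hv h
      rwa [replaceBlock_induce] at this
    · refine del_connected_of_notMem (S := G.induce B) hT hv ?_
      rwa [replaceBlock_induce]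

/-! ### Comparison of Wiener indices -/

lemma even_sum_dist [Fintype V] (G : SimpleGraph V) : 2 ∣ ∑ u : V, ∑ v : V, G.dist u v := by
  rw [← Finset.sum_product', ← ZMod.natCast_eq_zero_iff, Nat.cast_sum]
  refine Finset.sum_involution (fun a _ => (a.2, a.1)) ?_ ?_ ?_ ?_
  · intro a _
    rw [dist_comm, ← Nat.cast_add, ZMod.natCast_eq_zero_iff]
    exact ⟨_, (two_mul _).symm⟩
  · intro a _ ha h
    have := congrArg Prod.snd h
    simp only at this
    rw [this, dist_self] at ha
    exact ha Nat.cast_zero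
  · intro a _; simp
  · intro a _; rfl

lemma wienerIndex_lt [Fintype V] {G H : SimpleGraph V}
    (h : ∑ u : V, ∑ v : V, G.dist u v < ∑ u : V, ∑ v : V, H.dist u v) :
    wienerIndex G < wienerIndex H := by
  have h1 := even_sum_dist G
  have h2 := even_sum_dist H
  unfold wienerIndex
  omega

open Classical in
lemma sum_toBlock [Fintype V] (F : B → ℕ) :
    ∑ v : V, F (toBlock B w v) = ∑ x : B, F x + Fintype.card {v // v ∉ B} * F w := by
  rw [← Fintype.sum_subtype_add_sum_subtype (· ∈ B)]
  congr 1
  · exact Finset.sum_congr rfl fun x _ => by rw [toBlock_mem w x.2]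
  · rw [Finset.sum_congr rfl (fun x _ => by rw [toBlock_notMem w x.2])]
    simp

open Classical in
lemma sum_sum_toBlock [Fintype V] (S : SimpleGraph B) :
    ∑ u : V, ∑ v : V, S.dist (toBlock B w u) (toBlock B w v)
      = ∑ x : B, vertexDistance S x
        + 2 * Fintype.card {v // v ∉ B} * vertexDistance S w := by
  rw [sum_toBlock (w := w) (fun x => ∑ v : V, S.dist x (toBlock B w v))]
  have hinner : ∀ x : B, ∑ v : V, S.dist x (toBlock B w v)
      = vertexDistance S x + Fintype.card {v // v ∉ B} * S.dist x w :=
    fun x => sum_toBlock (w := w) (fun y => S.dist x y)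
  simp only [hinner]
  rw [Finset.sum_add_distrib, ← Finset.mul_sum, dist_self]
  have : ∑ x : B, S.dist x w = vertexDistance S w := Finset.sum_congr rfl fun x _ => dist_comm
  rw [this]
  ring

open Classical in
/-- Raising the transmissions inside the pendant block raises the Wiener index. -/
lemma wienerIndex_lt_replaceBlock [Fintype V] (hG : G.Connected) (hB : (G.induce B).Connected)
    (hT : T.Connected) (hsep : Separates G B w)
    (hle : ∀ x, vertexDistance (G.induce B) x ≤ vertexDistance T x)
    (hlt : ∃ x, vertexDistance (G.induce B) x < vertexDistance T x) :
    wienerIndex G < wienerIndex (replaceBlock G B T) := by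
  apply wienerIndex_lt
  have h1 : ∑ u : V, ∑ v : V, G.dist u v
      ≤ ∑ u : V, ∑ v : V, (G.induce B).dist (toBlock B w u) (toBlock B w v)
        + ∑ u : V, ∑ v : V, G.dist (offBlock B w u) (offBlock B w v) := by
    simp only [← Finset.sum_add_distrib]
    exact Finset.sum_le_sum fun u _ => Finset.sum_le_sum fun v _ => dist_le_of_induce hG hB u v
  have h2 : ∑ u : V, ∑ v : V, T.dist (toBlock B w u) (toBlock B w v)
        + ∑ u : V, ∑ v : V, G.dist (offBlock B w u) (offBlock B w v)
      ≤ ∑ u : V, ∑ v : V, (replaceBlock G B T).dist u v := by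
    simp only [← Finset.sum_add_distrib]
    exact Finset.sum_le_sum fun u _ => Finset.sum_le_sum fun v _ =>
      le_dist_replaceBlock hG hT hsep u v
  rw [sum_sum_toBlock] at h1 h2
  obtain ⟨x, hx⟩ := hlt
  have h3 : ∑ x : B, vertexDistance (G.induce B) x < ∑ x : B, vertexDistance T x :=
    Finset.sum_lt_sum (fun x _ => hle x) ⟨x, Finset.mem_univ _, hx⟩
  have h4 := Nat.mul_le_mul_left (2 * Fintype.card {v // v ∉ B}) (hle w)
  omega

end Replace

/-! ### The replacement graphs and the extremality argument -/

/-- The star on `B` with centre `w`. -/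
def starAt {W : Type*} (w : W) : SimpleGraph W where
  Adj a b := a ≠ b ∧ (a = w ∨ b = w)
  symm := ⟨fun _ _ h => ⟨h.1.symm, h.2.symm⟩⟩
  loopless := ⟨fun _ h => h.1 rfl⟩

lemma starAt_connected {W : Type*} (w : W) : (starAt w).Connected := by
  rw [connected_iff_exists_forall_reachable]
  refine ⟨w, fun x => ?_⟩
  by_cases h : w = x
  · rw [h]
  · exact Adj.reachable ⟨h, Or.inl rfl⟩

lemma starAt_del_connected {W : Type*} {w v : W} (hv : v ≠ w) :
    ((starAt w).induce ({v}ᶜ : Set W)).Connected := by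
  rw [connected_iff_exists_forall_reachable]
  refine ⟨⟨w, hv.symm⟩, ?_⟩
  rintro ⟨x, hx⟩
  by_cases h : w = x
  · subst h
    exact Reachable.refl _
  · exact Adj.reachable ⟨h, Or.inl rfl⟩

lemma starAt_vertexDistance {W : Type*} [Fintype W] (w x : W) (hx : x ≠ w)
    (hm : Fintype.card W = 3) : 2 < vertexDistance (starAt w) x := by
  classical
  obtain ⟨z, hz⟩ : ∃ z, z ∉ ({x, w} : Finset W) := by
    by_contra! h
    have := Finset.card_le_card (fun y _ => h y : (Finset.univ : Finset W) ⊆ {x, w})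
    have h' := Finset.card_le_two (a := x) (b := w)
    rw [Finset.card_univ] at this
    omega
  simp only [Finset.mem_insert, Finset.mem_singleton, not_or] at hz
  have h1 := (starAt_connected w).pos_dist_of_ne hx
  have h2 : 1 < (starAt w).dist x z :=
    (starAt_connected w).one_lt_dist_of_ne_of_not_adj (Ne.symm hz.1)
      (fun h => h.2.elim hx hz.2)
  have h3 : (starAt w).dist x w + (starAt w).dist x z ≤ vertexDistance (starAt w) x := by
    rw [← Finset.sum_pair (f := fun u => (starAt w).dist x u) (Ne.symm hz.2)]
    exact Finset.sum_le_sum_of_subset (Finset.subset_univ _)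
  omega

/-- In a connected graph all other vertices are at distance at least one. -/
lemma card_sub_one_le_vertexDistance {W : Type*} [Fintype W] {T : SimpleGraph W}
    (hT : T.Connected) (x : W) : Fintype.card W - 1 ≤ vertexDistance T x := by
  classical
  rw [← Finset.card_univ, ← Finset.card_erase_of_mem (Finset.mem_univ x), Finset.card_eq_sum_ones]
  refine le_trans (Finset.sum_le_sum fun u hu => ?_)
    (Finset.sum_le_sum_of_subset (f := fun u => T.dist x u) (Finset.subset_univ _))
  exact hT.pos_dist_of_ne (Finset.ne_of_mem_erase hu).symm

lemma vertexDistance_comap_le {W : Type*} [Fintype W] {m : ℕ} (e : W ≃ Fin m)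
    (hconn : ((cycleGraph m).comap e).Connected) (x : W) :
    vertexDistance (cycleGraph m) (e x) ≤ vertexDistance ((cycleGraph m).comap e) x := by
  unfold vertexDistance
  rw [← e.sum_comp]
  refine Finset.sum_le_sum fun u _ => ?_
  obtain ⟨p, hp⟩ := hconn.exists_walk_length_eq_dist x u
  rw [← hp, ← Walk.length_map (Hom.comap e (cycleGraph m)) p]
  exact dist_le _

/-- In a graph maximizing the Wiener index among connected graphs on `n`
vertices with exactly `k ≥ 1` cut vertices, every pendant block is `K₂` or a
cycle on at least `4` vertices. -/
theorem stmt12 (n k : ℕ) (hk : 1 ≤ k)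
    (G : SimpleGraph (Fin n)) (hG : G.Connected) (hcut : cutVertexCount G = k)
    (hmax : ∀ H : SimpleGraph (Fin n), H.Connected → cutVertexCount H = k →
      wienerIndex H ≤ wienerIndex G) :
    ∀ B : Set (Fin n), IsPendantBlock G B →
      B.ncard = 2 ∨ (4 ≤ B.ncard ∧
        Nonempty ((G.induce B) ≃g cycleG B.ncard)) := by
  classical
  rintro B ⟨hblock, hone⟩
  obtain ⟨w', hw'⟩ := Set.ncard_eq_one.mp hone
  obtain ⟨hwB, hcutw⟩ : w' ∈ B ∧ IsCutVertex G w' := by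
    have : w' ∈ {v ∈ B | IsCutVertex G v} := by rw [hw']; rfl
    exact this
  have hncut : ∀ v ∈ B, v ≠ w' → ¬ IsCutVertex G v := by
    intro v hv hne hc
    have : v ∈ {v ∈ B | IsCutVertex G v} := ⟨hv, hc⟩
    rw [hw'] at this
    exact hne this
  obtain ⟨w, rfl⟩ : ∃ w : B, w.1 = w' := ⟨⟨w', hwB⟩, rfl⟩
  have hsep : Separates G B w := fun x hx hxw y hy =>
    hblock.not_adj w.2 hx hxw (hncut x hx hxw) hy
  obtain ⟨hcard, hB, hBcut, -⟩ := hblock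
  have hBdel : ∀ v : B, ((G.induce B).induce ({v}ᶜ : Set B)).Connected :=
    fun v => not_not.mp (hBcut v)
  have hm : Fintype.card B = B.ncard := by
    rw [← Nat.card_eq_fintype_card, Nat.card_coe_set_eq]
  obtain ⟨x, hx, hxw⟩ := Set.exists_ne_of_one_lt_ncard (by omega : 1 < B.ncard) w.1
  -- If `B` were everything, `w` would be a cut vertex of `G` but not of its block `B`.
  obtain ⟨y, hy⟩ : ∃ y, y ∉ B := by
    by_contra! hall
    refine hcutw ?_
    have := (connected_del_induce_iff G B w).mp (hBdel w)
    rwa [show B \ {w.1} = ({w.1}ᶜ : Set (Fin n)) by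
      ext z; simp [hall z]] at this
  -- No replacement graph without new cut vertices can raise the transmissions inside `B`.
  have hno : ∀ T : SimpleGraph B, T.Connected →
      (∀ v : B, v ≠ w → (T.induce ({v}ᶜ : Set B)).Connected) →
      (∀ z, vertexDistance (G.induce B) z ≤ vertexDistance T z) →
      ∀ z, ¬ vertexDistance (G.induce B) z < vertexDistance T z := by
    intro T hT hTdel hle z hz
    have h1 := hmax (replaceBlock G B T) (replaceBlock_connected hG hT)
      ((cutVertexCount_replaceBlock hG hB hsep hcutw hncut hT hTdel hx hxw hy).trans hcut)
    have h2 := wienerIndex_lt_replaceBlock hG hB hT hsep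
      (fun z => by convert hle z) ⟨z, by convert hz⟩
    omega
  have hdB := vertexDistance_le_cycleSum hB hBdel
  rcases (by omega : B.ncard = 2 ∨ B.ncard = 3 ∨ 4 ≤ B.ncard) with h | h | h
  · exact Or.inl h
  · exfalso
    rw [h] at hm
    have h2 : ∀ z, vertexDistance (G.induce B) z ≤ 2 := by
      intro z
      have := hdB z
      rw [hm] at this
      exact this
    have hxw' : (⟨x, hx⟩ : B) ≠ w := fun h => hxw (congrArg Subtype.val h)
    refine hno (starAt w) (starAt_connected w) (fun v hv => starAt_del_connected hv) ?_ ⟨x, hx⟩ ?_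
    · intro z
      have := card_sub_one_le_vertexDistance (starAt_connected w) z
      have := h2 z
      omega
    · exact (h2 _).trans_lt (starAt_vertexDistance w _ hxw' hm)
  · right
    refine ⟨h, ?_⟩
    rw [cycleG_eq_cycleGraph _ (by omega), ← hm]
    rw [← hm] at h
    apply nonempty_iso_cycleGraph (by omega) hB hBdel
    intro z
    by_contra! h3
    set e : B ≃ Fin (Fintype.card B) := Fintype.equivFin B
    have hT : ((cycleGraph (Fintype.card B)).comap e).Connected := by
      refine connected_of_surjective (P := cycleGraph (Fintype.card B)) e.symm e.symm.surjective
        (fun a b hab => Adj.reachable ?_)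
        (@Connected.mk _ _ cycleGraph_preconnected ⟨e w⟩)
      simpa using hab
    have hTdel : ∀ v : B,
        (((cycleGraph (Fintype.card B)).comap e).induce ({v}ᶜ : Set B)).Connected := by
      intro v
      refine connected_of_surjective
        (P := (cycleGraph (Fintype.card B)).induce ({e v}ᶜ : Set (Fin (Fintype.card B))))
        (fun a => ⟨e.symm a.1, fun ha => a.2 ?_⟩) ?_ (fun a b hab => Adj.reachable ?_)
        (cycleGraph_del_connected _ (by omega) (e v))
      · rw [Set.mem_singleton_iff] at ha ⊢
        exact (e.symm_apply_eq).mp ha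
      · rintro ⟨a, ha⟩
        exact ⟨⟨e a, fun h => ha (e.injective h)⟩, Subtype.ext (e.symm_apply_apply a)⟩
      · simpa using hab
    have hge : ∀ z, cycleSum (Fintype.card B)
        ≤ vertexDistance ((cycleGraph (Fintype.card B)).comap e) z := fun z =>
      (cycleSum_le_vertexDistance _ (by omega) (e z)).trans (vertexDistance_comap_le e hT z)
    exact hno _ hT (fun v _ => hTdel v) (fun z => (hdB z).trans (hge z)) z
      ((vertexDistance_lt_cycleSum hB hBdel z h3).trans_le (hge z))
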